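/- Let μ be a restricted Lorentz transformation with polar decomposition μ = ρβ with respect to a timelike unit vector e₀. Then ρβ = βρ if and only if there exists a unit vector e orthogonal to e₀ such that μ maps the wedge W = {x : g(x,e) > |g(x,e₀)|} onto itself. -/

import Mathlib

noncomputable section

/-- Minkowski spacetime ℝ^{1+3}. -/
abbrev V4 : Type := Fin 4 → ℝ

/-- The Minkowski metric of signature (+,-,-,-). -/
def mg (x y : V4) : ℝ := x 0 * y 0 - x 1 * y 1 - x 2 * y 2 - x 3 * y 3

/-- The distinguished future-directed timelike unit vector. -/
def e0 : V4 := fun i => if i = 0 then 1 else 0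

/-- A restricted Lorentz transformation: preserves the metric, has determinant 1,
and preserves the time orientation. -/
def IsRestrictedLorentz (T : V4 →ₗ[ℝ] V4) : Prop :=
  (∀ x y, mg (T x) (T y) = mg x y) ∧ LinearMap.det T = 1 ∧ 0 < (T e0) 0

/-- The Euclidean inner product `⟨x,y⟩_e = -g(x,y) + 2 g(x,e) g(y,e)`
determined by a timelike unit vector `e`. -/
def inn (e x y : V4) : ℝ := -mg x y + 2 * mg x e * mg y e

/-- A rotation with respect to `e`: a restricted Lorentz transformation fixing `e`. -/
def IsRotationAt (e : V4) (T : V4 →ₗ[ℝ] V4) : Prop :=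
  IsRestrictedLorentz T ∧ T e = e

/-- A boost with respect to `e`: a restricted Lorentz transformation that is
self-adjoint and positive with respect to `⟨·,·⟩_e`. -/
def IsBoostAt (e : V4) (T : V4 →ₗ[ℝ] V4) : Prop :=
  IsRestrictedLorentz T ∧ (∀ x y, inn e (T x) y = inn e x (T y)) ∧
    (∀ x, x ≠ 0 → 0 < inn e (T x) x)

/-!
Write `μ = ρβ` and `f = β t`, where `t` is the unit timelike vector of the polar decomposition, and
put `c = g(f, t)`. Self-adjointness and invariance of `g` give `β f = 2cf - t`, and since `-1` is
not an eigenvalue of the positive map `β`, the boost is determined by `f` through an explicit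
formula. Hence `ρ` commutes with `β` if and only if `ρ f = f`, which by injectivity of `μ` is the
relation `μ² t = 2cμt - t`. For `f ≠ t` this says that `μ` acts on the plane of `t` and `f` by a
hyperbolic rotation, which scales its two null rays by positive factors; for `f = t` the map `μ` is
a rotation and an axis of it provides such a plane. On the other hand the null rays can be recovered
from the wedge: they are the null vectors in its dual cone. So `μ` preserves the wedge if and only
if it preserves both rays, an exchange being excluded by time orientation.
-/

section FixedVector

variable {K V : Type*} [Field K] [AddCommGroup V] [Module K V]

theorem exists_ne_zero_apply_eq_self_of_det_eq_neg_one [FiniteDimensional K V]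
    (h2 : (2 : K) ≠ 0) (heven : Even (Module.finrank K V)) {B : LinearMap.BilinForm K V}
    (hB : B.Nondegenerate) {T : V →ₗ[K] V} (hT : ∀ x y, B (T x) (T y) = B x y)
    (hdet : LinearMap.det T = -1) : ∃ v, v ≠ 0 ∧ T v = v := by
  let b := Module.finBasis K V
  let G := LinearMap.BilinForm.toMatrix b B
  let M := LinearMap.toMatrix b b T
  have hG : G.det ≠ 0 := (LinearMap.BilinForm.nondegenerate_iff_det_ne_zero b).1 hB
  have hM : M.det = -1 := (LinearMap.det_toMatrix b T).trans hdet
  have hMGM : M.transpose * G * M = G := by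
    rw [← LinearMap.BilinForm.toMatrix_comp b b B T T]
    exact congrArg _ (LinearMap.BilinForm.ext hT)
  have hfactor : M.transpose * G * (M - 1) = -(M - 1).transpose * G := by
    rw [mul_sub, hMGM, Matrix.transpose_sub, Matrix.transpose_one]
    noncomm_ring
  have hsub : (M - 1).det = 0 := by
    have h := congrArg Matrix.det hfactor
    simp only [Matrix.det_mul, Matrix.det_neg, Matrix.det_transpose, hM, Fintype.card_fin,
      heven.neg_one_pow] at h
    have : 2 * G.det * (M - 1).det = 0 := by linear_combination -h
    simpa [h2, hG] using this
  have hker : LinearMap.det (T - LinearMap.id) = 0 := by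
    rw [← LinearMap.det_toMatrix b, map_sub, LinearMap.toMatrix_id, hsub]
  obtain ⟨v, hv, hv0⟩ := (Submodule.ne_bot_iff _).1 (LinearMap.bot_lt_ker_of_det_eq_zero hker).ne'
  exact ⟨v, hv0, sub_eq_zero.1 hv⟩

end FixedVector

section MinkowskiForm

/-- The Minkowski metric `mg` as a bilinear form. -/
def minkowskiForm : LinearMap.BilinForm ℝ V4 :=
  Matrix.toBilin' (Matrix.diagonal ![1, -1, -1, -1])

theorem minkowskiForm_apply (x y : V4) : minkowskiForm x y = mg x y := by
  simp [minkowskiForm, Matrix.toBilin'_apply', Matrix.mulVec_diagonal, dotProduct,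
    Fin.sum_univ_four, mg, sub_eq_add_neg]

theorem minkowskiForm_nondegenerate : minkowskiForm.Nondegenerate :=
  LinearMap.BilinForm.nondegenerate_toBilin'_of_det_ne_zero' _ <| by
    simp [Matrix.det_diagonal, Fin.prod_univ_four]

theorem mg_comm (x y : V4) : mg x y = mg y x := by
  simp only [mg, mul_comm]

@[simp]
theorem mg_add_left (x y z : V4) : mg (x + y) z = mg x z + mg y z := by
  simp [← minkowskiForm_apply]

@[simp]
theorem mg_add_right (x y z : V4) : mg x (y + z) = mg x y + mg x z := by
  simp [← minkowskiForm_apply]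

@[simp]
theorem mg_sub_left (x y z : V4) : mg (x - y) z = mg x z - mg y z := by
  simp [← minkowskiForm_apply]

@[simp]
theorem mg_sub_right (x y z : V4) : mg x (y - z) = mg x y - mg x z := by
  simp [← minkowskiForm_apply]

@[simp]
theorem mg_smul_left (a : ℝ) (x y : V4) : mg (a • x) y = a * mg x y := by
  simp [← minkowskiForm_apply]

@[simp]
theorem mg_smul_right (a : ℝ) (x y : V4) : mg x (a • y) = a * mg x y := by
  simp [← minkowskiForm_apply]

@[simp]
theorem mg_neg_left (x y : V4) : mg (-x) y = -mg x y := by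
  simp [← minkowskiForm_apply]

theorem eq_of_forall_mg_eq {x y : V4} (h : ∀ z, mg x z = mg y z) : x = y := by
  refine sub_eq_zero.1 (minkowskiForm_nondegenerate.1 _ fun z ↦ ?_)
  rw [minkowskiForm_apply, mg_sub_left, h, sub_self]

theorem mg_self_neg_of_orthogonal {t x : V4} (ht : 0 < mg t t) (hxt : mg x t = 0) (hx : x ≠ 0) :
    mg x x < 0 := by
  have hcauchy : (x 1 * t 1 + x 2 * t 2 + x 3 * t 3) ^ 2 ≤
      (x 1 ^ 2 + x 2 ^ 2 + x 3 ^ 2) * (t 1 ^ 2 + t 2 ^ 2 + t 3 ^ 2) := by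
    simpa [Fin.sum_univ_three] using Finset.sum_mul_sq_le_sq_mul_sq Finset.univ
      ![x 1, x 2, x 3] ![t 1, t 2, t 3]
  by_contra! hnonneg
  simp only [mg] at ht hxt hnonneg
  have hx0 : x 0 = 0 := by
    refine pow_eq_zero_iff two_ne_zero |>.1 (le_antisymm ?_ (sq_nonneg _))
    have hprod : x 0 ^ 2 * (t 0 ^ 2 - (t 1 ^ 2 + t 2 ^ 2 + t 3 ^ 2)) ≤ 0 := by
      have hx0t0 : x 0 * t 0 = x 1 * t 1 + x 2 * t 2 + x 3 * t 3 := by linarith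
      rw [← hx0t0] at hcauchy
      nlinarith [sq_nonneg (t 1), sq_nonneg (t 2), sq_nonneg (t 3)]
    exact nonpos_of_mul_nonpos_left hprod (by linarith)
  have hspatial : x 1 = 0 ∧ x 2 = 0 ∧ x 3 = 0 := by
    rw [hx0] at hnonneg
    refine ⟨?_, ?_, ?_⟩ <;> nlinarith [sq_nonneg (x 1), sq_nonneg (x 2), sq_nonneg (x 3)]
  exact hx <| by ext i; fin_cases i <;> simp [hx0, hspatial]

theorem exists_eq_pos_smul_unit_spacelike {w : V4} (hw : mg w w < 0) :
    ∃ s : ℝ, 0 < s ∧ ∃ e, mg e e = -1 ∧ w = s • e := by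
  have hs : 0 < √(-mg w w) := Real.sqrt_pos.2 (neg_pos.2 hw)
  refine ⟨√(-mg w w), hs, (√(-mg w w))⁻¹ • w, ?_, (smul_inv_smul₀ hs.ne' w).symm⟩
  have hsq : √(-mg w w) ^ 2 = -mg w w := Real.sq_sqrt (neg_pos.2 hw).le
  rw [mg_smul_left, mg_smul_right]
  field_simp
  linarith

theorem inn_self_pos {t x : V4} (ht : mg t t = 1) (hx : x ≠ 0) : 0 < inn t x x := by
  set u := x - mg x t • t with hu
  have hx_eq : x = mg x t • t + u := by rw [hu]; abel
  have hut : mg u t = 0 := by simp [hu, ht]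
  have hinn : inn t x x = mg x t ^ 2 - mg u u := by
    simp only [inn, hu, mg_sub_left, mg_sub_right, mg_smul_left, mg_smul_right, ht, mg_comm t x]
    ring
  rw [hinn]
  by_cases hu0 : u = 0
  · have : mg x t ≠ 0 := fun h ↦ hx <| by rw [hx_eq, h, hu0]; simp
    rw [hu0]
    have : 0 < mg x t ^ 2 := by positivity
    simpa [mg]
  · have := mg_self_neg_of_orthogonal (ht ▸ one_pos) hut hu0
    nlinarith [sq_nonneg (mg x t)]

theorem inn_right_self {t : V4} (ht : mg t t = 1) (x : V4) : inn t x t = mg x t := by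
  rw [inn, ht]
  ring

/-- The full Lorentz group, with no condition on the determinant or the time orientation. -/
def IsLorentz (T : V4 →ₗ[ℝ] V4) : Prop :=
  ∀ x y, mg (T x) (T y) = mg x y

theorem IsLorentz.comp {S T : V4 →ₗ[ℝ] V4} (hS : IsLorentz S) (hT : IsLorentz T) :
    IsLorentz (S ∘ₗ T) := fun x y ↦ (hS _ _).trans (hT x y)

theorem IsLorentz.injective {T : V4 →ₗ[ℝ] V4} (hT : IsLorentz T) : Function.Injective T :=
  fun x y hxy ↦ eq_of_forall_mg_eq fun z ↦ by rw [← hT, hxy, hT]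

theorem IsLorentz.surjective {T : V4 →ₗ[ℝ] V4} (hT : IsLorentz T) : Function.Surjective T :=
  LinearMap.injective_iff_surjective.1 hT.injective

end MinkowskiForm

section Rotation

variable {t : V4} {ρ : V4 →ₗ[ℝ] V4}

theorem IsRotationAt.isLorentz (hρ : IsRotationAt t ρ) : IsLorentz ρ := hρ.1.1

theorem IsRotationAt.mg_apply (hρ : IsRotationAt t ρ) (x : V4) : mg (ρ x) t = mg x t := by
  rw [← hρ.isLorentz x t, hρ.2]

/-- The reflection `x ↦ x - 2 g(x,t) t` reversing the unit timelike direction `t`, which serves to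
turn a rotation into a Lorentz transformation of determinant `-1`. -/
def timeReflection (t : V4) : V4 →ₗ[ℝ] V4 :=
  LinearMap.transvection ((-2 : ℝ) • minkowskiForm.flip t) t

theorem timeReflection_apply (t x : V4) : timeReflection t x = x - (2 * mg x t) • t := by
  simp [timeReflection, LinearMap.transvection.apply, minkowskiForm_apply, sub_eq_add_neg]

theorem det_timeReflection (ht : mg t t = 1) : LinearMap.det (timeReflection t) = -1 := by
  rw [timeReflection, LinearMap.transvection.det]
  norm_num [minkowskiForm_apply, ht]

theorem isLorentz_timeReflection (ht : mg t t = 1) : IsLorentz (timeReflection t) := fun x y ↦ by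
  simp only [timeReflection_apply, mg_sub_left, mg_sub_right, mg_smul_left, mg_smul_right, ht,
    mg_comm t y]
  ring

theorem IsRotationAt.exists_axis (ht : mg t t = 1) (hρ : IsRotationAt t ρ) :
    ∃ w, w ≠ 0 ∧ mg w t = 0 ∧ ρ w = w := by
  have hσ : IsLorentz (ρ ∘ₗ timeReflection t) := hρ.isLorentz.comp (isLorentz_timeReflection ht)
  have hdet : LinearMap.det (ρ ∘ₗ timeReflection t) = -1 := by
    rw [LinearMap.det_comp, hρ.1.2.1, det_timeReflection ht, one_mul]
  obtain ⟨w, hw, hfix⟩ := exists_ne_zero_apply_eq_self_of_det_eq_neg_one two_ne_zero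
    (by rw [Module.finrank_fin_fun]; decide) minkowskiForm_nondegenerate
    (fun x y ↦ by simpa only [minkowskiForm_apply] using hσ x y) hdet
  have hwt : mg w t = 0 := by
    have h : mg w t = -mg w t := by
      calc mg w t = mg (ρ (timeReflection t w)) t := by rw [← LinearMap.comp_apply, hfix]
        _ = mg (timeReflection t w) t := hρ.mg_apply _
        _ = -mg w t := by
            simp only [timeReflection_apply, mg_sub_left, mg_smul_left, ht]
            ring
    linarith
  rw [LinearMap.comp_apply, timeReflection_apply, hwt, mul_zero, zero_smul, sub_zero] at hfix
  exact ⟨w, hw, hwt, hfix⟩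

end Rotation

section Boost

variable {t : V4} {ρ β : V4 →ₗ[ℝ] V4}

theorem IsBoostAt.isLorentz (hβ : IsBoostAt t β) : IsLorentz β := hβ.1.1

theorem IsBoostAt.mg_apply_self_pos (ht : mg t t = 1) (hβ : IsBoostAt t β) :
    0 < mg (β t) t := by
  have ht0 : t ≠ 0 := by rintro rfl; simp [mg] at ht
  simpa only [inn_right_self ht] using hβ.2.2 t ht0

theorem IsBoostAt.mg_apply (ht : mg t t = 1) (hβ : IsBoostAt t β) (x : V4) :
    mg (β x) t = 2 * mg x t * mg (β t) t - mg x (β t) := by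
  rw [← inn_right_self ht, hβ.2.1, inn]
  ring

theorem IsBoostAt.apply_apply (hβ : IsBoostAt t β) (x : V4) :
    β (β x) = x - (2 * mg x t) • t + (2 * mg (β x) t) • β t := by
  refine eq_of_forall_mg_eq fun z ↦ ?_
  obtain ⟨y, rfl⟩ := hβ.isLorentz.surjective z
  have hadj := hβ.2.1 x y
  simp only [inn] at hadj
  simp only [mg_add_left, mg_sub_left, mg_smul_left, hβ.isLorentz _ y, mg_comm t]
  linear_combination -hadj

theorem IsBoostAt.apply_apply_self (ht : mg t t = 1) (hβ : IsBoostAt t β) :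
    β (β t) = (2 * mg (β t) t) • β t - t := by
  rw [hβ.apply_apply, ht]
  module

theorem IsBoostAt.eq_zero_of_apply_eq_neg (ht : mg t t = 1) (hβ : IsBoostAt t β) {x : V4}
    (hx : β x = -x) : x = 0 := by
  by_contra hx0
  have hneg : inn t (β x) x = -inn t x x := by
    simp only [inn, hx, mg_neg_left]
    ring
  linarith [hβ.2.2 x hx0, inn_self_pos ht hx0]

theorem IsBoostAt.apply_eq (ht : mg t t = 1) (hβ : IsBoostAt t β) (x : V4) :
    β x = x - (mg x (t + β t) / (1 + mg (β t) t)) • (t + β t) + (2 * mg x t) • β t := by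
  set κ := mg x (t + β t) / (1 + mg (β t) t) with hκ
  have hκ_mul : κ * (1 + mg (β t) t) = mg x t + mg x (β t) := by
    have := hβ.mg_apply_self_pos ht
    rw [hκ, mg_add_right, div_mul_cancel₀ _ (by positivity)]
  have hneg : β (β x - (x - κ • (t + β t) + (2 * mg x t) • β t)) =
      -(β x - (x - κ • (t + β t) + (2 * mg x t) • β t)) := by
    simp only [map_sub, map_add, map_smul, hβ.apply_apply x, hβ.apply_apply_self ht]
    have hcoeff : 2 * mg (β x) t + 2 * κ * (1 + mg (β t) t) =
        4 * mg x t * mg (β t) t + 2 * mg x t := by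
      linear_combination 2 * hβ.mg_apply ht x + 2 * hκ_mul
    linear_combination (norm := module) hcoeff • β t
  exact sub_eq_zero.1 (hβ.eq_zero_of_apply_eq_neg ht hneg)

theorem rotation_comp_boost_comm_iff (ht : mg t t = 1) (hρ : IsRotationAt t ρ)
    (hβ : IsBoostAt t β) : ρ ∘ₗ β = β ∘ₗ ρ ↔ ρ (β t) = β t := by
  refine ⟨fun h ↦ by simpa [hρ.2] using LinearMap.congr_fun h t, fun hfix ↦ ?_⟩
  refine LinearMap.ext fun x ↦ ?_
  have hsum : ρ (t + β t) = t + β t := by rw [map_add, hρ.2, hfix]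
  have hmg_sum : mg (ρ x) (t + β t) = mg x (t + β t) := by
    rw [← hρ.isLorentz x (t + β t), hsum]
  rw [LinearMap.comp_apply, LinearMap.comp_apply, hβ.apply_eq ht x, hβ.apply_eq ht (ρ x),
    hρ.mg_apply, hmg_sum, map_add, map_sub, map_smul, map_smul, hsum, hfix]

end Boost

section Wedge

variable {t e : V4} {T : V4 →ₗ[ℝ] V4}

/-- The Rindler wedge `W_{(t,e)}`. -/
def rindlerWedge (t e : V4) : Set V4 := {x | |mg x t| < mg x e}

/-- `T` maps the null rays spanned by `e + t` and `e - t` onto themselves. These rays bound the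
section of the wedge `W_{(t,e)}` by the plane of `t` and `e`, with the opposite orientation:
`-(e + t)` and `-(e - t)` lie in its closure, because `g` is negative on spacelike vectors. -/
def PreservesNullRays (T : V4 →ₗ[ℝ] V4) (t e : V4) : Prop :=
  ∃ a b : ℝ, 0 < a ∧ 0 < b ∧ T (e + t) = a • (e + t) ∧ T (e - t) = b • (e - t)

theorem mem_rindlerWedge_iff {x : V4} :
    x ∈ rindlerWedge t e ↔ 0 < mg x (e + t) ∧ 0 < mg x (e - t) := by
  rw [rindlerWedge, Set.mem_ofPred_eq, abs_lt, mg_add_right, mg_sub_right, sub_pos,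
    ← neg_lt_iff_pos_add']

theorem PreservesNullRays.image_rindlerWedge (hT : IsLorentz T) (h : PreservesNullRays T t e) :
    T '' rindlerWedge t e = rindlerWedge t e := by
  obtain ⟨a, b, ha, hb, hadd, hsub⟩ := h
  ext y
  obtain ⟨x, rfl⟩ := hT.surjective y
  rw [hT.injective.mem_set_image, mem_rindlerWedge_iff, mem_rindlerWedge_iff,
    ← hT x (e + t), ← hT x (e - t), hadd, hsub, mg_smul_right, mg_smul_right,
    mul_pos_iff_of_pos_left ha, mul_pos_iff_of_pos_left hb]

theorem mg_eq_zero_of_forall_mem_rindlerWedge (he : mg e e = -1) (het : mg e t = 0) {m u : V4}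
    (hm : ∀ x ∈ rindlerWedge t e, 0 < mg x m) (hut : mg u t = 0) (hue : mg u e = 0) :
    mg u m = 0 := by
  -- The line `-e + ℝ u` lies in the wedge, so an affine function positive on it is constant.
  by_contra hne
  have h := hm ((mg e m / mg u m) • u - e) (by simp [rindlerWedge, hut, hue, he, het])
  rw [mg_sub_left, mg_smul_left, div_mul_cancel₀ _ hne, sub_self] at h
  exact h.false

theorem eq_sub_of_forall_mem_rindlerWedge (ht : mg t t = 1) (he : mg e e = -1) (het : mg e t = 0)
    {m : V4} (hm : ∀ x ∈ rindlerWedge t e, 0 < mg x m) : m = mg m t • t - mg m e • e := by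
  set u := m - mg m t • t + mg m e • e with hu
  have hut : mg u t = 0 := by simp [hu, ht, het]
  have hue : mg u e = 0 := by simp [hu, he, het, mg_comm t e]
  have huu : mg u u = 0 := by
    nth_rewrite 2 [hu]
    simp only [mg_add_right, mg_sub_right, mg_smul_right, hut, hue,
      mg_eq_zero_of_forall_mem_rindlerWedge he het hm hut hue]
    ring
  have hu0 : u = 0 := by
    by_contra hne
    exact (mg_self_neg_of_orthogonal (ht ▸ one_pos) hut hne).ne huu
  linear_combination (norm := module) hu0

theorem exists_pos_smul_of_null_of_forall_mem_rindlerWedge (ht : mg t t = 1) (he : mg e e = -1)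
    (het : mg e t = 0) {m : V4} (hnull : mg m m = 0)
    (hm : ∀ x ∈ rindlerWedge t e, 0 < mg x m) :
    ∃ a : ℝ, 0 < a ∧ (m = a • (e + t) ∨ m = a • (e - t)) := by
  have hm_eq := eq_sub_of_forall_mem_rindlerWedge ht he het hm
  have hpos : 0 < -mg m e := by
    simpa [mg_comm m] using hm (-e) (by simp [rindlerWedge, he, het])
  have hsq : mg m t ^ 2 = (-mg m e) ^ 2 := by
    rw [hm_eq] at hnull
    simp only [mg_sub_left, mg_sub_right, mg_smul_left, mg_smul_right, ht, he, het,
      mg_comm t e] at hnull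
    linear_combination hnull
  refine ⟨-mg m e, hpos, (sq_eq_sq_iff_eq_or_eq_neg.1 hsq).imp (fun h ↦ ?_) fun h ↦ ?_⟩
  all_goals
    nth_rewrite 1 [hm_eq]
    rw [h]
    module

theorem preservesNullRays_of_rindlerWedge_subset_image (ht : mg t t = 1) (he : mg e e = -1)
    (het : mg e t = 0) (hT : IsLorentz T) (hTt : 0 < mg (T t) t)
    (hW : rindlerWedge t e ⊆ T '' rindlerWedge t e) : PreservesNullRays T t e := by
  have hdual : ∀ n : V4, (∀ x ∈ rindlerWedge t e, 0 < mg x n) →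
      ∀ x ∈ rindlerWedge t e, 0 < mg x (T n) := by
    intro n hn x hx
    obtain ⟨y, hy, rfl⟩ := hW hx
    exact (hn y hy).trans_eq (hT y n).symm
  have hadd_null : mg (e + t) (e + t) = 0 := by simp [ht, he, het, mg_comm t e]
  have hsub_null : mg (e - t) (e - t) = 0 := by simp [ht, he, het, mg_comm t e]
  obtain ⟨a, ha, hadd⟩ := exists_pos_smul_of_null_of_forall_mem_rindlerWedge ht he het
    ((hT _ _).trans hadd_null) (hdual _ fun x hx ↦ (mem_rindlerWedge_iff.1 hx).1)
  obtain ⟨b, hb, hsub⟩ := exists_pos_smul_of_null_of_forall_mem_rindlerWedge ht he het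
    ((hT _ _).trans hsub_null) (hdual _ fun x hx ↦ (mem_rindlerWedge_iff.1 hx).2)
  have hprod : mg (T (e + t)) (T (e - t)) = -2 := by
    rw [hT]
    norm_num [ht, he, het, mg_comm t e]
  have hfuture : 0 < mg (T (e + t)) t - mg (T (e - t)) t := by
    have : T (e + t) - T (e - t) = (2 : ℝ) • T t := by rw [map_add, map_sub]; module
    rw [← mg_sub_left, this, mg_smul_left]
    positivity
  rcases hadd with hadd | hadd <;> rcases hsub with hsub | hsub
  · rw [hadd, hsub, mg_smul_left, mg_smul_right, hadd_null] at hprod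
    norm_num at hprod
  · exact ⟨a, b, ha, hb, hadd, hsub⟩
  · -- Exchanging the rays would make `T t` past-directed.
    simp only [hadd, hsub, mg_smul_left, mg_add_left, mg_sub_left, ht, het] at hfuture
    linarith
  · rw [hadd, hsub, mg_smul_left, mg_smul_right, hsub_null] at hprod
    norm_num at hprod

end Wedge

section NullRays

variable {t e : V4} {T : V4 →ₗ[ℝ] V4}

theorem PreservesNullRays.apply_apply (ht : mg t t = 1) (he : mg e e = -1) (het : mg e t = 0)
    (hT : IsLorentz T) (h : PreservesNullRays T t e) :
    T (T t) = (2 * mg (T t) t) • T t - t := by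
  obtain ⟨a, b, -, -, hadd, hsub⟩ := h
  have hab : a * b = 1 := by
    have h := hT (e + t) (e - t)
    simp only [hadd, hsub, mg_smul_left, mg_smul_right] at h
    have hne : mg (e + t) (e - t) ≠ 0 := by norm_num [ht, he, het, mg_comm t e]
    exact mul_right_cancel₀ hne (by linear_combination h)
  have ht_eq : t = (1 / 2 : ℝ) • (e + t) - (1 / 2 : ℝ) • (e - t) := by module
  have hTt : T t = (a / 2) • (e + t) - (b / 2) • (e - t) := by
    conv_lhs => rw [ht_eq, map_sub, map_smul, map_smul, hadd, hsub]
    module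
  have hTTt : T (T t) = (a ^ 2 / 2) • (e + t) - (b ^ 2 / 2) • (e - t) := by
    rw [hTt, map_sub, map_smul, map_smul, hadd, hsub]
    module
  have hc : 2 * mg (T t) t = a + b := by
    simp only [hTt, mg_sub_left, mg_add_left, mg_smul_left, ht, het]
    ring
  rw [hTTt, hc, hTt]
  linear_combination (norm := module) -hab • t

theorem preservesNullRays_of_apply_eq {c s : ℝ} (hc : 0 < c) (hcs : c ^ 2 - s ^ 2 = 1)
    (hTt : T t = c • t + s • e) (hTe : T e = s • t + c • e) :
    PreservesNullRays T t e := by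
  obtain ⟨hneg_lt, hlt⟩ := abs_lt.1 (abs_lt_of_sq_lt_sq (by linarith) hc.le : |s| < c)
  refine ⟨c + s, c - s, neg_lt_iff_pos_add'.1 hneg_lt, sub_pos.2 hlt, ?_, ?_⟩
  · rw [map_add, hTt, hTe]
    module
  · rw [map_sub, hTt, hTe]
    module

theorem exists_preservesNullRays_of_apply_apply_eq (ht : mg t t = 1) (hT : IsLorentz T)
    (hTt : 0 < mg (T t) t) (hne : T t ≠ t) (h : T (T t) = (2 * mg (T t) t) • T t - t) :
    ∃ e, mg e e = -1 ∧ mg e t = 0 ∧ PreservesNullRays T t e := by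
  set c := mg (T t) t with hc
  set v := T t - c • t with hv
  have hvt : mg v t = 0 := by simp [hv, ht, hc]
  have hvv : mg v v = 1 - c ^ 2 := by
    simp only [hv, mg_sub_left, mg_sub_right, mg_smul_left, mg_smul_right, hT t t, ht,
      mg_comm t (T t), ← hc]
    ring
  have hv0 : v ≠ 0 := by
    intro hv0
    have hc1 : c = 1 := by
      have : mg v v = 0 := by simp [hv0, mg]
      nlinarith
    exact hne <| by simpa [hc1, sub_eq_zero] using hv.symm.trans hv0
  obtain ⟨s, hs, e, he, hve⟩ :=
    exists_eq_pos_smul_unit_spacelike (mg_self_neg_of_orthogonal (ht ▸ one_pos) hvt hv0)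
  have hcs : c ^ 2 - s ^ 2 = 1 := by
    rw [hve, mg_smul_left, mg_smul_right, he] at hvv
    linear_combination hvv
  have het : mg e t = 0 := by simpa [hve, hs.ne'] using hvt
  have hTt_eq : T t = c • t + s • e := by rw [← hve, hv]; abel
  have hTe : T e = s • t + c • e := by
    refine smul_right_injective V4 hs.ne' ?_
    calc s • T e = T v := by rw [hve, map_smul]
      _ = c • T t - t := by rw [hv, map_sub, map_smul, h]; module
      _ = s • (s • t + c • e) := by
        rw [hTt_eq]
        linear_combination (norm := module) hcs • t
  exact ⟨e, he, het, preservesNullRays_of_apply_eq hTt hcs hTt_eq hTe⟩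

end NullRays

section Polar

variable {t : V4} {ρ β : V4 →ₗ[ℝ] V4}

theorem mg_polar_apply_self_pos (ht : mg t t = 1) (hρ : IsRotationAt t ρ) (hβ : IsBoostAt t β) :
    0 < mg ((ρ ∘ₗ β) t) t := by
  rw [LinearMap.comp_apply, hρ.mg_apply]
  exact hβ.mg_apply_self_pos ht

theorem exists_preservesNullRays_of_apply_eq_self (ht : mg t t = 1) (hρ : IsRotationAt t ρ)
    (hβ : IsBoostAt t β) (hβt : β t = t) :
    ∃ e, mg e e = -1 ∧ mg e t = 0 ∧ PreservesNullRays (ρ ∘ₗ β) t e := by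
  obtain ⟨w, hw, hwt, hρw⟩ := hρ.exists_axis ht
  obtain ⟨s, hs, e, he, rfl⟩ :=
    exists_eq_pos_smul_unit_spacelike (mg_self_neg_of_orthogonal (ht ▸ one_pos) hwt hw)
  have het : mg e t = 0 := by simpa [hs.ne'] using hwt
  have hρe : ρ e = e := smul_right_injective V4 hs.ne' (by simpa using hρw)
  have hβe : β e = e := by simp [hβ.apply_eq ht e, hβt, het]
  exact ⟨e, he, het, 1, 1, one_pos, one_pos, by simp [hβe, hβt, hρe, hρ.2],
    by simp [hβe, hβt, hρe, hρ.2]⟩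

theorem rotation_apply_boost_iff_exists_preservesNullRays (ht : mg t t = 1) (hρ : IsRotationAt t ρ)
    (hβ : IsBoostAt t β) : ρ (β t) = β t ↔
      ∃ e, mg e e = -1 ∧ mg e t = 0 ∧ PreservesNullRays (ρ ∘ₗ β) t e := by
  have hμ : IsLorentz (ρ ∘ₗ β) := hρ.isLorentz.comp hβ.isLorentz
  constructor
  · intro hfix
    by_cases hβt : β t = t
    · exact exists_preservesNullRays_of_apply_eq_self ht hρ hβ hβt
    · refine exists_preservesNullRays_of_apply_apply_eq ht hμ
        (mg_polar_apply_self_pos ht hρ hβ) ?_ ?_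
      · simpa [hfix]
      · simp [hfix, hβ.apply_apply_self ht, hρ.2]
  · rintro ⟨e, he, het, h⟩
    have hsq := h.apply_apply ht he het hμ
    simp only [LinearMap.comp_apply, hρ.mg_apply] at hsq
    refine hβ.isLorentz.injective (hρ.isLorentz.injective ?_)
    rw [hsq, hβ.apply_apply_self ht, map_sub, map_smul, hρ.2]

theorem polar_commutes_iff_preserves_wedge_general (ht : mg t t = 1) (hρ : IsRotationAt t ρ)
    (hβ : IsBoostAt t β) :
    ρ ∘ₗ β = β ∘ₗ ρ ↔
      ∃ e, mg e e = -1 ∧ mg e t = 0 ∧ (ρ ∘ₗ β) '' rindlerWedge t e = rindlerWedge t e := by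
  have hμ : IsLorentz (ρ ∘ₗ β) := hρ.isLorentz.comp hβ.isLorentz
  rw [rotation_comp_boost_comm_iff ht hρ hβ,
    rotation_apply_boost_iff_exists_preservesNullRays ht hρ hβ]
  refine exists_congr fun e ↦ and_congr_right fun he ↦ and_congr_right fun het ↦ ?_
  exact ⟨fun h ↦ h.image_rindlerWedge hμ, fun hW ↦
    preservesNullRays_of_rindlerWedge_subset_image ht he het hμ
      (mg_polar_apply_self_pos ht hρ hβ) hW.superset⟩

end Polar

/-- Let `μ = ρ ∘ β` be the polar decomposition of a restricted Lorentz
transformation with respect to `e₀`. Then `ρ` and `β` commute if and only if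
there is a spacelike unit vector `e ⊥ e₀` such that `μ` maps the Rindler wedge
`W = {x : g(x,e) > |g(x,e₀)|}` onto itself. -/
theorem polar_commutes_iff_preserves_wedge
    (μ ρ β : V4 →ₗ[ℝ] V4) (hμ : IsRestrictedLorentz μ)
    (hρ : IsRotationAt e0 ρ) (hβ : IsBoostAt e0 β) (hpolar : μ = ρ ∘ₗ β) :
    ρ ∘ₗ β = β ∘ₗ ρ ↔
      ∃ e : V4, mg e e = -1 ∧ mg e e0 = 0 ∧
        (⇑μ '' {x : V4 | |mg x e0| < mg x e}) = {x : V4 | |mg x e0| < mg x e} := by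
  subst hpolar
  exact polar_commutes_iff_preserves_wedge_general (by simp [mg, e0]) hρ hβ
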